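/- arXiv:1902.02406 — 2 statements merged into one kernel-verified Lean document; each statement's English description precedes it below -/
import Mathlib

section
/- Let X be a complex Banach space. For every q ∈ (0,∞) there exists a constant C_q ∈ (0,∞) such that for every n,d ∈ ℕ with 1 ≤ d ≤ n, every function f : {-1,1}^n → X of degree at most d satisfies Ent(‖f‖_X^q) ≤ C_q · d · ‖f‖_{L_q({-1,1}^n;X)}^q. -/
open scoped BigOperators ENNReal NNReal

noncomputable section

namespace HammingCube

variable {X : Type*} [NormedAddCommGroup X] [NormedSpace ℂ X]

/-- The sign ±1 associated to a boolean coordinate. -/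
def sgn (b : Bool) : ℝ := if b then 1 else -1

/-- The Walsh function `w_A(ε) = ∏_{i ∈ A} ε_i`. -/
def walsh {n : ℕ} (A : Finset (Fin n)) (ε : Fin n → Bool) : ℝ := ∏ i ∈ A, sgn (ε i)

/-- The Fourier–Walsh coefficient `f̂(A) = 2⁻ⁿ ∑_δ f(δ) w_A(δ)`. -/
def coeff {n : ℕ} (f : (Fin n → Bool) → X) (A : Finset (Fin n)) : X :=
  (2 ^ n : ℝ)⁻¹ • ∑ δ : Fin n → Bool, walsh A δ • f δ

/-- `f` has degree at most `d`: `f̂(A) = 0` whenever `|A| > d`. -/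
def degLE {n : ℕ} (f : (Fin n → Bool) → X) (d : ℕ) : Prop :=
  ∀ A : Finset (Fin n), d < A.card → coeff f A = 0

/-- `f` belongs to the `d`-th tail space: `f̂(A) = 0` whenever `|A| < d`. -/
def tailSpace {n : ℕ} (f : (Fin n → Bool) → X) (d : ℕ) : Prop :=
  ∀ A : Finset (Fin n), A.card < d → coeff f A = 0

/-- The heat semigroup `e^{-tΔ} f = ∑_A e^{-t|A|} f̂(A) w_A`. -/
def heat {n : ℕ} (t : ℝ) (f : (Fin n → Bool) → X) : (Fin n → Bool) → X :=
  fun ε => ∑ A : Finset (Fin n), Real.exp (-t * A.card) • walsh A ε • coeff f A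

/-- The hypercube Laplacian `Δ f = ∑_A |A| f̂(A) w_A`. -/
def lap {n : ℕ} (f : (Fin n → Bool) → X) : (Fin n → Bool) → X :=
  fun ε => ∑ A : Finset (Fin n), (A.card : ℝ) • walsh A ε • coeff f A

/-- The fractional Laplacian `Δ^γ f = ∑_A |A|^γ f̂(A) w_A`. -/
def fracLap {n : ℕ} (γ : ℝ) (f : (Fin n → Bool) → X) : (Fin n → Bool) → X :=
  fun ε => ∑ A : Finset (Fin n), ((A.card : ℝ) ^ γ) • walsh A ε • coeff f A

/-- The `i`-th discrete partial derivative. -/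
def pderiv {n : ℕ} (i : Fin n) (f : (Fin n → Bool) → X) : (Fin n → Bool) → X :=
  fun ε => (2 : ℝ)⁻¹ • (f ε - f (Function.update ε i (!(ε i))))

/-- The vector-valued `L_p` norm `(2⁻ⁿ ∑_ε ‖f(ε)‖^p)^{1/p}` for finite `p`. -/
def lpNorm {n : ℕ} {Y : Type*} [NormedAddCommGroup Y] (p : ℝ)
    (f : (Fin n → Bool) → Y) : ℝ :=
  ((2 ^ n : ℝ)⁻¹ * ∑ ε : Fin n → Bool, ‖f ε‖ ^ p) ^ (1 / p)

/-- The `L_∞` norm `max_ε ‖f(ε)‖`. -/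
def linfNorm {n : ℕ} {Y : Type*} [NormedAddCommGroup Y]
    (f : (Fin n → Bool) → Y) : ℝ :=
  ⨆ ε : Fin n → Bool, ‖f ε‖

/-- The `L_p` norm for `p ∈ [1,∞]` encoded as `p : ℝ≥0∞`. -/
def lpNormE {n : ℕ} {Y : Type*} [NormedAddCommGroup Y] (p : ℝ≥0∞)
    (f : (Fin n → Bool) → Y) : ℝ :=
  if p = ⊤ then linfNorm f else lpNorm p.toReal f

/-- The scalar `L_p` norm of the gradient `‖(∑_i |∂_i f|²)^{1/2}‖_{L_p}`. -/
def gradLpNorm {n : ℕ} (p : ℝ) (f : (Fin n → Bool) → ℂ) : ℝ :=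
  lpNorm p (fun ε => Real.sqrt (∑ i : Fin n, ‖pderiv i f ε‖ ^ 2))

/-- The Rademacher projection `Rad f(ε) = ∑_i f̂({i}) ε_i`. -/
def Rad {n : ℕ} (f : (Fin n → Bool) → X) : (Fin n → Bool) → X :=
  fun ε => ∑ i : Fin n, sgn (ε i) • coeff f {i}

/-- A complex Banach space is `K`-convex if the Rademacher projections are uniformly
bounded on `L_q` for some `q ∈ (1,∞)`. -/
def KConvex (X : Type*) [NormedAddCommGroup X] [NormedSpace ℂ X] : Prop :=
  ∃ q : ℝ, 1 < q ∧ ∃ M : ℝ, ∀ (n : ℕ) (f : (Fin n → Bool) → X),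
    lpNorm q (Rad f) ≤ M * lpNorm q f

/-- `X` has cotype `q` with constant `C`. -/
def HasCotype (X : Type*) [NormedAddCommGroup X] [NormedSpace ℂ X] (q C : ℝ) : Prop :=
  ∀ (n : ℕ) (x : Fin n → X),
    C⁻¹ * (∑ i : Fin n, ‖x i‖ ^ q) ^ (1 / q) ≤
      ((2 ^ n : ℝ)⁻¹ * ∑ ε : Fin n → Bool, ‖∑ i : Fin n, sgn (ε i) • x i‖ ^ q) ^ (1 / q)

/-- The entropy `Ent(h)` of a nonnegative function on the cube. -/
def entropy {n : ℕ} (h : (Fin n → Bool) → ℝ) : ℝ :=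
  (2 ^ n : ℝ)⁻¹ * ∑ ε : Fin n → Bool, h ε * Real.log (h ε) -
    ((2 ^ n : ℝ)⁻¹ * ∑ ε : Fin n → Bool, h ε) *
      Real.log ((2 ^ n : ℝ)⁻¹ * ∑ ε : Fin n → Bool, h ε)

/-- The `L_∞` norm of the gradient `max_ε (∑_i |∂_i f(ε)|²)^{1/2}`. -/
def gradLinfNorm {n : ℕ} (f : (Fin n → Bool) → ℂ) : ℝ :=
  ⨆ ε : Fin n → Bool, Real.sqrt (∑ i : Fin n, ‖pderiv i f ε‖ ^ 2)


/-! ### Auxiliary material -/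

/-- The noise kernel. -/
def ker {n : ℕ} (r : ℝ) (ε δ : Fin n → Bool) : ℝ :=
  ∏ i, (1 + r * (sgn (ε i) * sgn (δ i))) / 2

lemma sgn_mul_cases (a b : Bool) :
    sgn a * sgn b = if a = b then 1 else -1 := by
  cases a <;> cases b <;> simp [sgn]

lemma ker_nonneg {n : ℕ} {r : ℝ} (h0 : 0 ≤ r) (h1 : r ≤ 1) (ε δ : Fin n → Bool) :
    0 ≤ ker r ε δ := by
  unfold ker
  refine Finset.prod_nonneg fun i _ => ?_
  rw [sgn_mul_cases]
  split_ifs <;> linarith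

lemma ker_sum {n : ℕ} (r : ℝ) (ε : Fin n → Bool) : ∑ δ, ker r ε δ = 1 := by
  unfold ker
  have h := Finset.prod_univ_sum (fun _ : Fin n => (Finset.univ : Finset Bool))
    (fun i b => (1 + r * (sgn (ε i) * sgn b)) / 2)
  rw [Fintype.piFinset_univ] at h
  rw [← h]
  refine Finset.prod_eq_one fun i _ => ?_
  simp [sgn]
  ring

lemma ker_one {n : ℕ} (ε δ : Fin n → Bool) : ker 1 ε δ = if ε = δ then 1 else 0 := by
  unfold ker
  split_ifs with h
  · subst h
    refine Finset.prod_eq_one fun i _ => ?_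
    rw [sgn_mul_cases]; norm_num
  · obtain ⟨i, hi⟩ := Function.ne_iff.mp h
    refine Finset.prod_eq_zero (Finset.mem_univ i) ?_
    rw [sgn_mul_cases, if_neg hi]; norm_num

lemma ker_expand {n : ℕ} (r : ℝ) (ε δ : Fin n → Bool) :
    ker r ε δ = ∑ A : Finset (Fin n), r ^ A.card * walsh A ε * ((2 ^ n : ℝ)⁻¹ * walsh A δ) := by
  unfold ker walsh
  rw [Finset.prod_div_distrib, Finset.prod_one_add, Finset.powerset_univ, Finset.sum_div]
  refine Finset.sum_congr rfl fun A _ => ?_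
  rw [Finset.prod_mul_distrib, Finset.prod_mul_distrib]
  simp
  ring

/-- The noise operator. -/
def noise {n : ℕ} (r : ℝ) (f : (Fin n → Bool) → X) (ε : Fin n → Bool) : X :=
  ∑ δ, ker r ε δ • f δ

lemma noise_eq {n : ℕ} (r : ℝ) (f : (Fin n → Bool) → X) (ε : Fin n → Bool) :
    noise r f ε = ∑ A : Finset (Fin n), (r ^ A.card * walsh A ε) • coeff f A := by
  unfold noise coeff
  simp_rw [ker_expand, Finset.sum_smul, Finset.smul_sum, smul_smul]
  rw [Finset.sum_comm]

lemma noise_one {n : ℕ} (f : (Fin n → Bool) → X) (ε : Fin n → Bool) :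
    noise 1 f ε = f ε := by
  unfold noise
  simp [ker_one]

lemma extrap (d : ℕ) : ∃ c : ℕ → ℝ, ∑ j ∈ Finset.range (d + 1), |c j| ≤ 9 ^ d ∧
    ∀ k ≤ d, ∑ j ∈ Finset.range (d + 1), c j * (j : ℝ) ^ k = ((2 * d : ℕ) : ℝ) ^ k := by
  refine ⟨fun j => ∑ i ∈ Finset.range (d + 1),
    ((2 * d).choose i : ℝ) * ((-1) ^ (i - j) * (i.choose j : ℝ)), ?_, ?_⟩
  · calc _ ≤ ∑ j ∈ Finset.range (d + 1), ∑ i ∈ Finset.range (d + 1),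
          ((2 * d).choose i : ℝ) * (i.choose j : ℝ) := by
          refine Finset.sum_le_sum fun j _ => (Finset.abs_sum_le_sum_abs _ _).trans ?_
          refine Finset.sum_le_sum fun i _ => ?_
          simp [abs_mul]
      _ = ∑ i ∈ Finset.range (d + 1), ((2 * d).choose i : ℝ) *
            ∑ j ∈ Finset.range (d + 1), (i.choose j : ℝ) := by
          rw [Finset.sum_comm]
          simp_rw [Finset.mul_sum]
      _ = ∑ i ∈ Finset.range (d + 1), ((2 * d).choose i : ℝ) * 2 ^ i := by
          refine Finset.sum_congr rfl fun i hi => ?_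
          congr 1
          have hi' : i + 1 ≤ d + 1 := by have := Finset.mem_range.mp hi; omega
          have : ∑ j ∈ Finset.range (i + 1), (i.choose j : ℝ)
              = ∑ j ∈ Finset.range (d + 1), (i.choose j : ℝ) := by
            refine Finset.sum_subset (Finset.range_mono hi') fun x _ hx => ?_
            rw [Nat.choose_eq_zero_of_lt (by simpa using hx)]; simp
          rw [← this]
          exact_mod_cast Nat.sum_range_choose i
      _ ≤ ∑ i ∈ Finset.range (2 * d + 1), ((2 * d).choose i : ℝ) * 2 ^ i := by
          refine Finset.sum_le_sum_of_subset_of_nonneg (Finset.range_mono (by omega)) ?_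
          intros; positivity
      _ = (2 + 1) ^ (2 * d) := by
          rw [add_pow]
          refine Finset.sum_congr rfl fun i _ => ?_
          simp [mul_comm]
      _ = 9 ^ d := by rw [pow_mul]; norm_num
  · intro k hk
    have h1 := shift_eq_sum_fwdDiff_iter (1 : ℝ) (fun x : ℝ => x ^ k) (2 * d) 0
    simp only [zero_add, nsmul_eq_mul, mul_one] at h1
    rw [h1]
    have h2 : ∑ i ∈ Finset.range (2 * d + 1), ((2 * d).choose i : ℝ) *
          (fwdDiff (1 : ℝ))^[i] (fun x : ℝ => x ^ k) 0
        = ∑ i ∈ Finset.range (d + 1), ((2 * d).choose i : ℝ) *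
          (fwdDiff (1 : ℝ))^[i] (fun x : ℝ => x ^ k) 0 := by
      symm
      refine Finset.sum_subset (Finset.range_mono (by omega)) fun i _ hi => ?_
      have : k < i := by
        have : d + 1 ≤ i := by simpa using hi
        omega
      rw [fwdDiff_iter_pow_eq_zero_of_lt this]; simp
    rw [h2]
    simp_rw [Finset.sum_mul]
    rw [Finset.sum_comm]
    refine Finset.sum_congr rfl fun i hi => ?_
    have hi' : i + 1 ≤ d + 1 := by have := Finset.mem_range.mp hi; omega
    rw [fwdDiff_iter_eq_sum_shift, Finset.mul_sum]
    symm
    refine (Finset.sum_subset (Finset.range_mono hi') fun x _ hx => ?_).trans ?_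
    · rw [Nat.choose_eq_zero_of_lt (show i < x by simpa using hx)]; simp
    · refine Finset.sum_congr rfl fun j _ => ?_
      simp only [zero_add, nsmul_eq_mul, mul_one, zsmul_eq_mul]
      push_cast
      ring

lemma noise_cons {n : ℕ} (r : ℝ) (h : (Fin (n + 1) → Bool) → ℝ) (s : Bool)
    (ε : Fin n → Bool) :
    ∑ δ, ker r (Fin.cons s ε) δ * h δ =
      (1 + r * (sgn s * sgn true)) / 2 * ∑ δ, ker r ε δ * h (Fin.cons true δ) +
      (1 + r * (sgn s * sgn false)) / 2 * ∑ δ, ker r ε δ * h (Fin.cons false δ) := by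
  rw [← (Fin.consEquiv (fun _ => Bool)).sum_comp, Fintype.sum_prod_type, Fintype.sum_bool,
    Finset.mul_sum, Finset.mul_sum]
  simp only [Fin.consEquiv, Equiv.coe_fn_mk, ker, Fin.prod_univ_succ, Fin.cons_zero, Fin.cons_succ,
    mul_assoc]

lemma sum_cons {n : ℕ} (h : (Fin (n + 1) → Bool) → ℝ) :
    ∑ δ, h δ = ∑ δ, (h (Fin.cons true δ) + h (Fin.cons false δ)) := by
  rw [← (Fin.consEquiv (fun _ => Bool)).sum_comp, Fintype.sum_prod_type, Fintype.sum_bool,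
    Finset.sum_add_distrib]
  rfl

lemma hyper (r : ℝ) (hr : r ^ 2 ≤ 1 / 3) : ∀ (n : ℕ) (h : (Fin n → Bool) → ℝ),
    2 ^ n * ∑ ε, (∑ δ, ker r ε δ * h δ) ^ 4 ≤ (∑ δ, h δ ^ 2) ^ 2
  | 0, h => by
    simp [ker, ← pow_mul]
  | n + 1, h => by
    set g0 : (Fin n → Bool) → ℝ := fun δ => (h (Fin.cons true δ) + h (Fin.cons false δ)) / 2
      with hg0
    set g1 : (Fin n → Bool) → ℝ := fun δ => (h (Fin.cons true δ) - h (Fin.cons false δ)) / 2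
      with hg1
    have i0 := hyper r hr n g0
    have i1 := hyper r hr n g1
    set p : (Fin n → Bool) → ℝ := fun ε => ∑ δ, ker r ε δ * g0 δ with hp
    set s : (Fin n → Bool) → ℝ := fun ε => ∑ δ, ker r ε δ * g1 δ with hs
    have e1 : ∀ ε, ∑ δ, ker r ε δ * h (Fin.cons true δ) = p ε + s ε := by
      intro ε
      simp only [hp, hs, ← Finset.sum_add_distrib]
      refine Finset.sum_congr rfl fun δ _ => ?_
      simp only [hg0, hg1]; ring
    have e2 : ∀ ε, ∑ δ, ker r ε δ * h (Fin.cons false δ) = p ε - s ε := by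
      intro ε
      simp only [hp, hs, ← Finset.sum_sub_distrib]
      refine Finset.sum_congr rfl fun δ _ => ?_
      simp only [hg0, hg1]; ring
    have eL : ∑ ε, (∑ δ, ker r ε δ * h δ) ^ 4
        = 2 * ∑ ε, p ε ^ 4 + 12 * r ^ 2 * ∑ ε, p ε ^ 2 * s ε ^ 2 + 2 * r ^ 4 * ∑ ε, s ε ^ 4 := by
      rw [sum_cons]
      simp_rw [noise_cons, e1, e2, Finset.mul_sum, ← Finset.sum_add_distrib]
      refine Finset.sum_congr rfl fun ε _ => ?_
      simp [sgn]; ring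
    have eR : ∑ δ, h δ ^ 2 = 2 * (∑ δ, g0 δ ^ 2 + ∑ δ, g1 δ ^ 2) := by
      rw [sum_cons, ← Finset.sum_add_distrib, Finset.mul_sum]
      refine Finset.sum_congr rfl fun ε _ => ?_
      simp only [hg0, hg1]; ring
    have hA : 0 ≤ ∑ δ, g0 δ ^ 2 := Finset.sum_nonneg fun _ _ => sq_nonneg _
    have hB : 0 ≤ ∑ δ, g1 δ ^ 2 := Finset.sum_nonneg fun _ _ => sq_nonneg _
    have cs := Finset.sum_mul_sq_le_sq_mul_sq Finset.univ (fun ε => p ε ^ 2) (fun ε => s ε ^ 2)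
    simp only [← pow_mul] at cs
    norm_num at cs
    have hP : 0 ≤ ∑ ε, p ε ^ 4 := Finset.sum_nonneg fun _ _ => by positivity
    have hS : 0 ≤ ∑ ε, s ε ^ 4 := Finset.sum_nonneg fun _ _ => by positivity
    have hM : 0 ≤ ∑ ε, p ε ^ 2 * s ε ^ 2 := Finset.sum_nonneg fun _ _ => by positivity
    rw [eL, eR]
    change 2 ^ n * ∑ ε, p ε ^ 4 ≤ _ at i0
    change 2 ^ n * ∑ ε, s ε ^ 4 ≤ _ at i1
    generalize ∑ ε, p ε ^ 4 = P at *
    generalize ∑ ε, s ε ^ 4 = S at *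
    generalize ∑ ε, p ε ^ 2 * s ε ^ 2 = M at *
    generalize ∑ δ, g0 δ ^ 2 = A at *
    generalize ∑ δ, g1 δ ^ 2 = B at *
    have h2 : (0 : ℝ) < 2 ^ n := by positivity
    have hMAB : 2 ^ n * M ≤ A * B := by
      refine abs_le_of_sq_le_sq' ?_ (by positivity) |>.2
      calc (2 ^ n * M) ^ 2 = (2 ^ n) ^ 2 * M ^ 2 := by ring
        _ ≤ (2 ^ n) ^ 2 * (P * S) := by gcongr
        _ = (2 ^ n * P) * (2 ^ n * S) := by ring
        _ ≤ A ^ 2 * B ^ 2 := by gcongr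
        _ = (A * B) ^ 2 := by ring
    have hr4 : r ^ 4 ≤ 1 := by nlinarith [sq_nonneg r]
    calc 2 ^ (n + 1) * (2 * P + 12 * r ^ 2 * M + 2 * r ^ 4 * S)
        = 4 * (2 ^ n * P + 6 * (r ^ 2 * (2 ^ n * M)) + r ^ 4 * (2 ^ n * S)) := by ring
      _ ≤ 4 * (A ^ 2 + 6 * (1 / 3 * (A * B)) + 1 * B ^ 2) := by gcongr
      _ = (2 * (A + B)) ^ 2 := by ring

lemma noise_moment {n : ℕ} (f : (Fin n → Bool) → X) {r q : ℝ} (h0 : 0 ≤ r) (h1 : r ≤ 1 / 2)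
    (hq : 2 ≤ q) :
    2 ^ n * ∑ ε, ‖noise r f ε‖ ^ (2 * q) ≤ (∑ ε, ‖f ε‖ ^ q) ^ 2 := by
  have hh := hyper r (by nlinarith) n (fun δ => ‖f δ‖ ^ (q / 2))
  have e : ∀ δ, (‖f δ‖ ^ (q / 2)) ^ 2 = ‖f δ‖ ^ q := by
    intro δ
    rw [← Real.rpow_natCast, ← Real.rpow_mul (norm_nonneg _)]
    congr 1; push_cast; ring
  simp only [e] at hh
  refine le_trans ?_ hh
  gcongr with ε
  have k0 := fun δ => ker_nonneg h0 (by linarith : r ≤ 1) ε δ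
  have a1 : ‖noise r f ε‖ ≤ ∑ δ, ker r ε δ * ‖f δ‖ := by
    refine (norm_sum_le _ _).trans (Finset.sum_le_sum fun δ _ => ?_)
    rw [norm_smul, Real.norm_of_nonneg (k0 δ)]
  have a2 := Real.rpow_arith_mean_le_arith_mean_rpow Finset.univ (fun δ => ker r ε δ)
    (fun δ => ‖f δ‖) (fun δ _ => k0 δ) (ker_sum r ε) (fun δ _ => norm_nonneg _)
    (by linarith : 1 ≤ q / 2)
  have a3 : ‖noise r f ε‖ ^ (q / 2) ≤ ∑ δ, ker r ε δ * ‖f δ‖ ^ (q / 2) :=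
    (Real.rpow_le_rpow (norm_nonneg _) a1 (by linarith)).trans a2
  calc ‖noise r f ε‖ ^ (2 * q) = (‖noise r f ε‖ ^ (q / 2)) ^ 4 := by
        rw [← Real.rpow_natCast, ← Real.rpow_mul (norm_nonneg _)]
        congr 1; push_cast; ring
    _ ≤ _ := by gcongr

lemma degLE_repr {n d : ℕ} (hd : 1 ≤ d) (f : (Fin n → Bool) → X) (hf : degLE f d) (c : ℕ → ℝ)
    (hc : ∀ k ≤ d, ∑ j ∈ Finset.range (d + 1), c j * (j : ℝ) ^ k = ((2 * d : ℕ) : ℝ) ^ k)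
    (ε : Fin n → Bool) :
    f ε = ∑ j ∈ Finset.range (d + 1), c j • noise ((j : ℝ) / (2 * d : ℕ)) f ε := by
  rw [← noise_one f ε]
  simp_rw [noise_eq, Finset.smul_sum]
  rw [Finset.sum_comm]
  refine Finset.sum_congr rfl fun A _ => ?_
  by_cases hA : d < A.card
  · simp [hf A hA]
  · push Not at hA
    simp_rw [smul_smul]
    rw [← Finset.sum_smul]
    congr 1
    simp_rw [← mul_assoc]
    rw [← Finset.sum_mul, one_pow]
    congr 1
    simp_rw [div_pow, ← mul_div_assoc]
    rw [← Finset.sum_div, hc _ hA, div_self]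
    have : 2 * d ≠ 0 := by omega
    exact pow_ne_zero _ (by exact_mod_cast this)

lemma moment {n d : ℕ} (hd : 1 ≤ d) (f : (Fin n → Bool) → X) (hf : degLE f d) {q : ℝ}
    (hq : 2 ≤ q) :
    2 ^ n * ∑ ε, ‖f ε‖ ^ (2 * q) ≤ (9 ^ (2 * q) * 2) ^ d * (∑ ε, ‖f ε‖ ^ q) ^ 2 := by
  obtain ⟨c, hc1, hc2⟩ := extrap d
  set F : ℕ → (Fin n → Bool) → X := fun j => noise ((j : ℝ) / (2 * d : ℕ)) f with hF
  have hpt : ∀ ε, ‖f ε‖ ^ (2 * q) ≤ (9 ^ (2 * q)) ^ d *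
      ∑ j ∈ Finset.range (d + 1), ‖F j ε‖ ^ (2 * q) := by
    intro ε
    obtain ⟨m, hm, hmax⟩ := Finset.exists_max_image (Finset.range (d + 1)) (fun j => ‖F j ε‖)
      ⟨0, by simp⟩
    have b1 : ‖f ε‖ ≤ 9 ^ d * ‖F m ε‖ := by
      rw [degLE_repr hd f hf c hc2 ε]
      refine (norm_sum_le _ _).trans ?_
      calc _ ≤ ∑ j ∈ Finset.range (d + 1), |c j| * ‖F m ε‖ := by
            refine Finset.sum_le_sum fun j hj => ?_
            rw [norm_smul, Real.norm_eq_abs]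
            exact mul_le_mul_of_nonneg_left (hmax j hj) (abs_nonneg _)
        _ = (∑ j ∈ Finset.range (d + 1), |c j|) * ‖F m ε‖ := by rw [Finset.sum_mul]
        _ ≤ _ := by gcongr
    calc ‖f ε‖ ^ (2 * q) ≤ (9 ^ d * ‖F m ε‖) ^ (2 * q) :=
          Real.rpow_le_rpow (norm_nonneg _) b1 (by linarith)
      _ = (9 ^ (2 * q)) ^ d * ‖F m ε‖ ^ (2 * q) := by
          rw [Real.mul_rpow (by positivity) (norm_nonneg _), ← Real.rpow_natCast,
            ← Real.rpow_natCast, ← Real.rpow_mul (by norm_num), ← Real.rpow_mul (by norm_num),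
            mul_comm (d : ℝ)]
      _ ≤ _ := by
          gcongr
          exact Finset.single_le_sum (f := fun j => ‖F j ε‖ ^ (2 * q))
            (fun j _ => by positivity) hm
  have hd' : (0 : ℝ) < d := by exact_mod_cast hd
  calc 2 ^ n * ∑ ε, ‖f ε‖ ^ (2 * q)
      ≤ 2 ^ n * ∑ ε, (9 ^ (2 * q)) ^ d * ∑ j ∈ Finset.range (d + 1), ‖F j ε‖ ^ (2 * q) := by
        gcongr with ε; exact hpt ε
    _ = (9 ^ (2 * q)) ^ d * ∑ j ∈ Finset.range (d + 1), 2 ^ n * ∑ ε, ‖F j ε‖ ^ (2 * q) := by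
        rw [← Finset.mul_sum, Finset.sum_comm, ← Finset.mul_sum]; ring
    _ ≤ (9 ^ (2 * q)) ^ d * ∑ j ∈ Finset.range (d + 1), (∑ ε, ‖f ε‖ ^ q) ^ 2 := by
        gcongr with j hj
        refine noise_moment f (by positivity) ?_ hq
        have : (j : ℝ) ≤ d := by
          have := Finset.mem_range.mp hj
          exact_mod_cast (by omega : j ≤ d)
        push_cast
        rw [div_le_div_iff₀ (by positivity) (by norm_num)]
        linarith
    _ = (9 ^ (2 * q)) ^ d * (d + 1) * (∑ ε, ‖f ε‖ ^ q) ^ 2 := by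
        simp; ring
    _ ≤ _ := by
        rw [mul_pow]
        gcongr
        have : d + 1 ≤ 2 ^ d := Nat.lt_two_pow_self
        exact_mod_cast this

lemma log_jensen {ι : Type*} (s : Finset ι) (g y : ι → ℝ) (hg : ∀ i, 0 ≤ g i)
    (hy : ∀ i, 0 < g i → 0 < y i) {G S : ℝ} (hG : G = ∑ i ∈ s, g i)
    (hS : S = ∑ i ∈ s, g i * y i) (hG0 : 0 < G) (hS0 : 0 < S) :
    ∑ i ∈ s, g i * Real.log (y i) ≤ G * Real.log (S / G) := by
  have hc : 0 < S / G := div_pos hS0 hG0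
  calc ∑ i ∈ s, g i * Real.log (y i)
      ≤ ∑ i ∈ s, (g i * y i * (G / S) + g i * (Real.log (S / G) - 1)) := by
        refine Finset.sum_le_sum fun i _ => ?_
        rcases (hg i).eq_or_lt with h | h
        · simp [← h]
        · have hyi := hy i h
          have := Real.log_le_sub_one_of_pos (div_pos hyi hc)
          rw [Real.log_div hyi.ne' hc.ne'] at this
          have e : y i / (S / G) = y i * (G / S) := by field_simp
          rw [e] at this
          have := mul_le_mul_of_nonneg_left this h.le
          linarith
    _ = G * Real.log (S / G) := by
        rw [Finset.sum_add_distrib, ← Finset.sum_mul, ← Finset.sum_mul, ← hS, ← hG]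
        field_simp
        ring

lemma entropy_aux {n d : ℕ} (hd : 1 ≤ d) (f : (Fin n → Bool) → X) (hf : degLE f d) {q : ℝ}
    (hq : 0 < q) (hS : 0 < ∑ ε, ‖f ε‖ ^ q) :
    ∑ ε, ‖f ε‖ ^ q * Real.log (‖f ε‖ ^ q) ≤ (∑ ε, ‖f ε‖ ^ q) *
      (d * Real.log (9 ^ (2 * max q 2) * 2) + Real.log ((2 ^ n : ℝ)⁻¹ * ∑ ε, ‖f ε‖ ^ q)) := by
  set G := ∑ ε, ‖f ε‖ ^ q with hG
  have h2n : (0 : ℝ) < 2 ^ n := by positivity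
  obtain ⟨ε₀, -, hε₀⟩ := Finset.exists_ne_zero_of_sum_ne_zero hS.ne'
  have hf0 : 0 < ‖f ε₀‖ := by
    refine (norm_nonneg _).lt_of_ne fun h => hε₀ ?_
    rw [← h, Real.zero_rpow hq.ne']
  have hpos : ∀ p : ℝ, 0 < ∑ ε, ‖f ε‖ ^ p := fun p =>
    Finset.sum_pos' (fun _ _ => by positivity) ⟨ε₀, Finset.mem_univ _, Real.rpow_pos_of_pos hf0 p⟩
  have hgpos : ∀ ε, 0 < ‖f ε‖ ^ q → 0 < ‖f ε‖ := by
    intro ε h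
    refine (norm_nonneg _).lt_of_ne fun h' => h.ne ?_
    rw [← h', Real.zero_rpow hq.ne']
  rcases le_or_gt 2 q with h2 | h2
  · rw [max_eq_left h2]
    have hm := moment hd f hf h2
    rw [← hG] at hm
    have hM := hpos (2 * q)
    have e : ∑ ε, ‖f ε‖ ^ (2 * q) = ∑ ε, ‖f ε‖ ^ q * ‖f ε‖ ^ q := by
      refine Finset.sum_congr rfl fun ε _ => ?_
      rw [← Real.rpow_add_of_nonneg (norm_nonneg _) hq.le hq.le]; congr 1; ring
    refine (log_jensen Finset.univ _ _ (fun ε => by positivity) (fun ε h => h) hG e hS hM).trans ?_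
    gcongr
    rw [← Real.log_pow, ← Real.log_mul (by positivity) (by positivity)]
    refine Real.log_le_log (by positivity) ?_
    rw [div_le_iff₀ hS, ← mul_le_mul_iff_right₀ h2n]
    refine hm.trans (le_of_eq ?_)
    field_simp
  · rw [max_eq_right h2.le]
    have hm := moment hd f hf (le_refl 2)
    have hM2 := hpos 2
    have hM4 := hpos (2 * 2)
    have hq2 : 0 < 2 - q := by linarith
    have e2 : ∑ ε, ‖f ε‖ ^ (2 : ℝ) = ∑ ε, ‖f ε‖ ^ q * ‖f ε‖ ^ (2 - q) := by
      refine Finset.sum_congr rfl fun ε _ => ?_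
      rw [← Real.rpow_add_of_nonneg (norm_nonneg _) hq.le hq2.le]; congr 1; ring
    have j1 := log_jensen Finset.univ (fun ε => ‖f ε‖ ^ q) (fun ε => ‖f ε‖ ^ (2 - q))
      (fun ε => by positivity) (fun ε h => Real.rpow_pos_of_pos (hgpos ε h) _) hG e2 hS hM2
    have eL : ∑ ε, ‖f ε‖ ^ q * Real.log (‖f ε‖ ^ q)
        = q / (2 - q) * ∑ ε, ‖f ε‖ ^ q * Real.log (‖f ε‖ ^ (2 - q)) := by
      rw [Finset.mul_sum]
      refine Finset.sum_congr rfl fun ε _ => ?_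
      rcases (Real.rpow_nonneg (norm_nonneg (f ε)) q).eq_or_lt with h | h
      · simp [← h]
      · rw [Real.log_rpow (hgpos ε h), Real.log_rpow (hgpos ε h)]
        field_simp
    have hp : 1 ≤ (4 - q) / (2 - q) := by
      rw [le_div_iff₀ hq2]; linarith
    have j2 := Real.rpow_arith_mean_le_arith_mean_rpow Finset.univ (fun ε => ‖f ε‖ ^ q / G)
      (fun ε => ‖f ε‖ ^ (2 - q)) (fun ε _ => by positivity)
      (by rw [← Finset.sum_div, ← hG, div_self hS.ne']) (fun ε _ => by positivity) hp
    have e3 : ∑ ε, ‖f ε‖ ^ q / G * ‖f ε‖ ^ (2 - q) = (∑ ε, ‖f ε‖ ^ (2 : ℝ)) / G := by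
      rw [e2, Finset.sum_div]
      exact Finset.sum_congr rfl fun ε _ => by ring
    have e4 : ∑ ε, ‖f ε‖ ^ q / G * (‖f ε‖ ^ (2 - q)) ^ ((4 - q) / (2 - q))
        = (∑ ε, ‖f ε‖ ^ (2 * 2 : ℝ)) / G := by
      rw [Finset.sum_div]
      refine Finset.sum_congr rfl fun ε _ => ?_
      rw [← Real.rpow_mul (norm_nonneg _), mul_div_cancel₀ _ hq2.ne', div_mul_eq_mul_div,
        ← Real.rpow_add_of_nonneg (norm_nonneg _) hq.le (by linarith)]
      congr 2; ring
    rw [e3, e4] at j2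
    set A := ∑ ε, ‖f ε‖ ^ (2 : ℝ) with hA
    set B := ∑ ε, ‖f ε‖ ^ (2 * 2 : ℝ) with hB
    set K : ℝ := 9 ^ (2 * 2 : ℝ) * 2 with hK
    have hK0 : 0 < K := by positivity
    have hz : 0 < A / G := by positivity
    have hlog : q / (2 - q) * Real.log (A / G)
        ≤ d * Real.log K + Real.log ((2 ^ n : ℝ)⁻¹ * G) := by
      have k1 : (A / G) ^ ((4 - q) / (2 - q)) ≤ K ^ d * ((2 ^ n : ℝ)⁻¹ * G) * (A / G) ^ 2 := by
        refine j2.trans ?_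
        rw [div_le_iff₀ hS, ← mul_le_mul_iff_right₀ h2n]
        refine hm.trans (le_of_eq ?_)
        field_simp
      have k2 := Real.log_le_log (by positivity) k1
      rw [Real.log_rpow hz, Real.log_mul (by positivity) (by positivity),
        Real.log_mul (by positivity) (by positivity), Real.log_pow, Real.log_pow] at k2
      have : (4 - q) / (2 - q) = q / (2 - q) + 2 := by field_simp; ring
      rw [this] at k2
      push_cast at k2
      linarith
    rw [eL]
    calc _ ≤ q / (2 - q) * (G * Real.log (A / G)) := by gcongr
      _ = G * (q / (2 - q) * Real.log (A / G)) := by ring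
      _ ≤ _ := by gcongr

/-- **Entropy bound for vector-valued functions of low degree.** -/
theorem stmt17 {X : Type*} [NormedAddCommGroup X] [NormedSpace ℂ X] [CompleteSpace X]
    (q : ℝ) (hq : 0 < q) :
    ∃ C : ℝ, 0 < C ∧
      ∀ n d : ℕ, 1 ≤ d → d ≤ n → ∀ f : (Fin n → Bool) → X, degLE f d →
        entropy (fun ε => ‖f ε‖ ^ q) ≤ C * d * (lpNorm q f) ^ q := by
  have hK : (1 : ℝ) < 9 ^ (2 * max q 2) * 2 := by
    have : (1 : ℝ) ≤ 9 ^ (2 * max q 2) :=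
      Real.one_le_rpow (by norm_num) (by have := le_max_right q 2; linarith)
    linarith
  refine ⟨Real.log (9 ^ (2 * max q 2) * 2), Real.log_pos hK, ?_⟩
  intro n d hd _ f hf
  have hnn : 0 ≤ (2 ^ n : ℝ)⁻¹ * ∑ ε : Fin n → Bool, ‖f ε‖ ^ q := by positivity
  have e : (lpNorm q f) ^ q = (2 ^ n : ℝ)⁻¹ * ∑ ε : Fin n → Bool, ‖f ε‖ ^ q := by
    unfold lpNorm
    rw [← Real.rpow_mul hnn, one_div, inv_mul_cancel₀ hq.ne', Real.rpow_one]
  rw [e]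
  unfold entropy
  have hS0 : 0 ≤ ∑ ε : Fin n → Bool, ‖f ε‖ ^ q := by positivity
  rcases hS0.eq_or_lt with h | h
  · have hz : ∀ ε, ‖f ε‖ ^ q = 0 := by
      intro ε
      exact (Finset.sum_eq_zero_iff_of_nonneg (fun i _ => by positivity)).mp h.symm ε
        (Finset.mem_univ _)
    simp [hz]
  · have := entropy_aux hd f hf hq h
    have h2 := mul_le_mul_of_nonneg_left this (by positivity : (0 : ℝ) ≤ (2 ^ n : ℝ)⁻¹)
    linarith

end HammingCube
end
end

section
/- Let X be a K-convex complex Banach space and p ∈ (1,∞). Then there exists c ∈ (0,∞) such that for every n,d,m ∈ ℕ with d + m ≤ n, every function f : {-1,1}^n → X of degree at most d + m which is also in the d-th tail space satisfies ‖Δ^{1/2} f‖_{L_p({-1,1}^n;X)} ≥ c · √(d/m) · ‖f‖_{L_p({-1,1}^n;X)}. -/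
open scoped BigOperators ENNReal NNReal

noncomputable section

namespace HammingCube

variable {X : Type*} [NormedAddCommGroup X] [NormedSpace ℂ X]

theorem aux_prod (i k : ℕ) :
    ∏ j ∈ (Finset.range (i + k + 1)).erase i, |((i:ℝ) - j)| = (i.factorial : ℝ) * k.factorial := by
  have h1 : ∏ j ∈ (Finset.range (i + k + 1)).erase i, |((i:ℝ) - j)|
      = ∏ j ∈ Finset.range (i + (k + 1)), (if j = i then (1:ℝ) else |((i:ℝ) - j)|) := by
    rw [← Finset.mul_prod_erase (Finset.range (i + (k+1))) _ (a := i) (by simp)]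
    simp only [if_true, one_mul]
    apply Finset.prod_congr (by rw [add_assoc])
    intro j hj
    rw [if_neg (Finset.ne_of_mem_erase hj)]
  rw [h1, Finset.prod_range_add, Finset.prod_range_succ']
  simp only [add_zero, if_true, mul_one]
  congr 1
  · rw [← Finset.prod_range_reflect, ← Finset.prod_range_add_one_eq_factorial]
    push_cast
    apply Finset.prod_congr rfl
    intro j hj
    have := Finset.mem_range.1 hj
    rw [if_neg (by omega)]
    have h2 : ((i - 1 - j : ℕ) : ℝ) = i - 1 - j := by
      rw [Nat.cast_sub (by omega), Nat.cast_sub (by omega)]; simp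
    rw [h2, abs_of_nonneg] <;> [ring; skip]
    have : (0:ℝ) ≤ j := by positivity
    linarith
  · rw [← Finset.prod_range_add_one_eq_factorial]
    push_cast
    apply Finset.prod_congr rfl
    intro j hj
    rw [if_neg (by omega), abs_of_nonpos] <;> [ring; skip]
    have : (0:ℝ) ≤ j := by positivity
    linarith

theorem aux_fact (m : ℕ) : (m:ℝ) ^ m / m.factorial ≤ Real.exp 1 ^ m := by
  rw [← Real.exp_nat_mul, mul_one]
  exact Real.pow_div_factorial_le_exp (m:ℝ) (by positivity) m

theorem aux_sum (m : ℕ) : ∑ i ∈ Finset.range (m+1), 1 / ((i.factorial : ℝ) * (m-i).factorial)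
    = 2 ^ m / m.factorial := by
  rw [eq_div_iff (by positivity), Finset.sum_mul]
  have : (2:ℝ)^m = ∑ i ∈ Finset.range (m+1), (m.choose i : ℝ) := by
    exact_mod_cast (Nat.sum_range_choose m).symm
  rw [this]
  apply Finset.sum_congr rfl
  intro i hi
  have := Finset.mem_range.1 hi
  rw [Nat.cast_choose ℝ (by omega : i ≤ m)]
  field_simp

theorem interp_bound {E : Type*} [NormedAddCommGroup E] [NormedSpace ℝ E] (d m : ℕ) (hm : 1 ≤ m)
    (q : ℕ → E) (M : ℝ)
    (hM : ∀ x : ℝ, 0 ≤ x → x ≤ 1 → ‖∑ j ∈ Finset.range (m+1), x ^ (d+j) • q j‖ ≤ M)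
    (η x : ℝ) (h0 : 0 < η) (h1 : η < 1) (hx0 : 0 ≤ x) (hx : x ≤ 1 - η) :
    ‖∑ j ∈ Finset.range (m+1), x ^ (d+j) • q j‖
      ≤ (x / (1 - η)) ^ d * (2 * Real.exp 1 * ((1 - x) / η)) ^ m * M := by
  have hm0 : (0:ℝ) < m := by exact_mod_cast hm
  set v : ℕ → ℝ := fun i => 1 - i * (η / m) with hv
  have hηm : 0 < η / m := by positivity
  have hvs : Set.InjOn v (Finset.range (m+1)) := by
    intro a _ b _ hab
    simp only [hv] at hab
    have : (a:ℝ) * (η/m) = b * (η/m) := by linarith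
    exact_mod_cast mul_right_cancel₀ hηm.ne' this
  have hvle : ∀ i, v i ≤ 1 := fun i => by
    have : 0 ≤ (i:ℝ) * (η/m) := by positivity
    simp only [hv]; linarith
  have hvge : ∀ i ∈ Finset.range (m+1), 1 - η ≤ v i := by
    intro i hi
    have h : (i:ℝ) ≤ m := by exact_mod_cast Nat.lt_succ_iff.1 (Finset.mem_range.1 hi)
    have : (i:ℝ) * (η/m) ≤ m * (η/m) := by gcongr
    have h2 : m * (η/m) = η := by field_simp
    simp only [hv]; linarith
  have hM0 : 0 ≤ M := (norm_nonneg _).trans (hM 0 le_rfl zero_le_one)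
  set L : ℕ → ℝ := fun i => (Lagrange.basis (Finset.range (m+1)) v i).eval x with hL
  have hlag : ∀ j ∈ Finset.range (m+1), x ^ j = ∑ i ∈ Finset.range (m+1), v i ^ j * L i := by
    intro j hj
    have := Lagrange.eq_interpolate (f := (Polynomial.X ^ j : Polynomial ℝ)) hvs (by
      rw [Polynomial.degree_X_pow, Finset.card_range]
      exact_mod_cast Finset.mem_range.1 hj)
    have h2 := congrArg (Polynomial.eval x) this
    rw [Lagrange.interpolate_apply, Polynomial.eval_finsetSum] at h2
    simpa [hL] using h2
  have hLb : ∀ i ∈ Finset.range (m+1),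
      |L i| ≤ ((1 - x) / (η / m)) ^ m * (1 / ((i.factorial : ℝ) * (m-i).factorial)) := by
    intro i hi
    have him : i ≤ m := Nat.lt_succ_iff.1 (Finset.mem_range.1 hi)
    have hc : ((Finset.range (m+1)).erase i).card = m := by
      rw [Finset.card_erase_of_mem hi, Finset.card_range]; rfl
    have hp := aux_prod i (m - i)
    rw [Nat.add_sub_cancel' him] at hp
    have hpc : ((1 - x) / (η / m)) ^ m
        = ∏ _j ∈ (Finset.range (m+1)).erase i, ((1 - x) / (η / m)) := by
      rw [Finset.prod_const, hc]
    rw [← hp, hpc]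
    simp only [hL, Lagrange.basis, Polynomial.eval_prod, Finset.abs_prod]
    rw [one_div, ← Finset.prod_inv_distrib, ← Finset.prod_mul_distrib]
    apply Finset.prod_le_prod
    · intros; positivity
    intro j hj
    have hj' := Finset.mem_of_mem_erase hj
    have hji := Finset.ne_of_mem_erase hj
    have e1 : v i - v j = -((i:ℝ) - j) * (η / m) := by simp only [hv]; ring
    simp only [Lagrange.basisDivisor, Polynomial.eval_mul, Polynomial.eval_C, Polynomial.eval_sub,
      Polynomial.eval_X]
    rw [e1, abs_mul, abs_inv, abs_mul, abs_neg, abs_of_pos hηm]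
    have e2 : |x - v j| ≤ 1 - x := by
      have := hvle j
      have := hvge j hj'
      rw [abs_of_nonpos (by linarith)]; linarith
    have e3 : 0 < |(i:ℝ) - j| := abs_pos.2 (sub_ne_zero.2 (by exact_mod_cast hji.symm))
    calc (|(i:ℝ) - j| * (η/m))⁻¹ * |x - v j| ≤ (|(i:ℝ) - j| * (η/m))⁻¹ * (1 - x) := by gcongr
      _ = _ := by field_simp
  have key : ∑ j ∈ Finset.range (m+1), x ^ (d+j) • q j
      = ∑ i ∈ Finset.range (m+1), (L i * (x / v i)^d) •
          ∑ j ∈ Finset.range (m+1), v i ^ (d+j) • q j := by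
    simp only [Finset.smul_sum, smul_smul]
    rw [Finset.sum_comm]
    apply Finset.sum_congr rfl
    intro j hj
    rw [← Finset.sum_smul, pow_add, hlag j hj, Finset.mul_sum]
    congr 1
    apply Finset.sum_congr rfl
    intro i hi
    have : v i ≠ 0 := by have := hvge i hi; intro h; linarith
    rw [div_pow, pow_add]
    field_simp
  rw [key]
  have hxη : (0:ℝ) < 1 - η := by linarith
  have hx1 : (0:ℝ) ≤ 1 - x := by linarith
  calc _ ≤ ∑ i ∈ Finset.range (m+1), (((1 - x) / (η / m)) ^ m *
        (1 / ((i.factorial : ℝ) * (m-i).factorial)) * (x / (1 - η))^d) * M := by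
        refine norm_sum_le_of_le _ fun i hi => ?_
        have hvi := hvge i hi
        rw [norm_smul, norm_mul, Real.norm_eq_abs, Real.norm_eq_abs, abs_of_nonneg
          (by apply pow_nonneg; apply div_nonneg hx0; linarith : 0 ≤ (x / v i)^d)]
        have hvi0 : 0 ≤ v i := by linarith
        have := hLb i hi
        have := hM (v i) (by linarith) (hvle i)
        gcongr
    _ = ((1 - x) / (η / m)) ^ m * (2 ^ m / m.factorial) * (x / (1 - η))^d * M := by
        rw [← Finset.sum_mul, ← Finset.sum_mul, ← Finset.mul_sum, aux_sum]
    _ = (x / (1 - η))^d * ((2 * ((1 - x) / η))^m * ((m:ℝ)^m / m.factorial)) * M := by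
        have : (1 - x) / (η / m) = ((1 - x) / η) * m := by field_simp
        rw [this, mul_pow, mul_pow]
        ring
    _ ≤ (x / (1 - η))^d * ((2 * ((1 - x) / η))^m * Real.exp 1 ^ m) * M := by
        have := aux_fact m
        gcongr
    _ = _ := by rw [← mul_pow]; ring_nf

theorem decay {E : Type*} [NormedAddCommGroup E] [NormedSpace ℝ E] (d m : ℕ) (hd : 1 ≤ d)
    (hm : 1 ≤ m) (q : ℕ → E) (M : ℝ)
    (hM : ∀ x : ℝ, 0 ≤ x → x ≤ 1 → ‖∑ j ∈ Finset.range (m+1), x ^ (d+j) • q j‖ ≤ M)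
    (t : ℝ) (ht : 0 ≤ t) :
    ‖∑ j ∈ Finset.range (m+1), (Real.exp (-t)) ^ (d+j) • q j‖
      ≤ Real.exp 8 * Real.exp (-((d:ℝ) / (2 * m) * t)) * M := by
  have hm0 : (0:ℝ) < m := by exact_mod_cast hm
  have hd0 : (0:ℝ) < d := by exact_mod_cast hd
  have hM0 : 0 ≤ M := (norm_nonneg _).trans (hM 0 le_rfl zero_le_one)
  obtain ⟨r, hr⟩ : ∃ r, r = t * d / m := ⟨_, rfl⟩
  have hdt : (d:ℝ) * t = m * r := by rw [hr]; field_simp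
  have e0 : (d:ℝ) / (2 * m) * t = r / 2 := by rw [hr]; field_simp
  rw [e0]
  have hr0 : 0 ≤ r := by rw [hr]; positivity
  have hx1 : Real.exp (-t) ≤ 1 := by simpa using ht
  rcases lt_or_ge r 16 with h16 | h16
  · refine (hM _ (Real.exp_nonneg _) hx1).trans ?_
    rw [← Real.exp_add]
    have : 1 ≤ Real.exp (8 + -(r/2)) := Real.one_le_exp (by linarith)
    nlinarith
  suffices h : ‖∑ j ∈ Finset.range (m+1), (Real.exp (-t)) ^ (d+j) • q j‖
      ≤ (Real.exp (-(r/2)))^m * M by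
    refine h.trans ?_
    gcongr
    have h3 : Real.exp (-(r/2)) ≤ 1 := by simpa using (by linarith : 0 ≤ r / 2)
    calc (Real.exp (-(r/2)))^m ≤ (Real.exp (-(r/2)))^1 :=
          pow_le_pow_of_le_one (Real.exp_nonneg _) h3 hm
      _ ≤ _ := by
        rw [pow_one]
        exact le_mul_of_one_le_left (Real.exp_nonneg _) (Real.one_le_exp (by norm_num))
  have he : 2.7 < Real.exp 1 := by have := Real.exp_one_gt_d9; linarith
  have he2 : Real.exp 1 < 2.72 := by have := Real.exp_one_lt_d9; linarith
  have hexp : ∀ s : ℝ, Real.exp (-t) ^ d * Real.exp s ^ m = Real.exp (s - r) ^ m := by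
    intro s
    rw [← Real.exp_nat_mul, ← Real.exp_nat_mul, ← Real.exp_nat_mul, ← Real.exp_add]
    congr 1
    linear_combination -hdt
  rcases le_total m d with hmd | hmd
  · have hmd' : (m:ℝ) ≤ d := by exact_mod_cast hmd
    set τ : ℝ := m / d with hτ
    have hτ0 : 0 < τ := by positivity
    have hτ1 : τ ≤ 1 := by rw [hτ, div_le_one hd0]; exact hmd'
    have htr : t = r * τ := by rw [hr, hτ]; field_simp
    have hη : τ / 2 ≤ 1 - Real.exp (-τ) := by
      have h1 : 1 + τ ≤ Real.exp τ := by linarith [Real.add_one_le_exp τ]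
      have h2 : Real.exp (-τ) ≤ 1 / (1 + τ) := by
        rw [Real.exp_neg, ← one_div]; gcongr
      have h3 : 1 / (1 + τ) ≤ 1 - τ / 2 := by
        rw [div_le_iff₀ (by linarith)]; nlinarith
      linarith
    have hb := interp_bound d m hm q M hM (1 - Real.exp (-τ)) (Real.exp (-t))
      (by linarith) (by linarith [Real.exp_pos (-τ)]) (Real.exp_nonneg _)
      (by
        have : Real.exp (-t) ≤ Real.exp (-τ) := Real.exp_le_exp.2 (by rw [htr]; nlinarith)
        linarith)
    refine hb.trans ?_
    gcongr
    have hs : (1 - Real.exp (-t)) / (1 - Real.exp (-τ)) ≤ 2 * r := by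
      have : 1 - Real.exp (-t) ≤ t := by linarith [Real.add_one_le_exp (-t)]
      rw [div_le_iff₀ (by linarith)]
      have : r * (τ/2) ≤ r * (1 - Real.exp (-τ)) := by gcongr
      rw [htr] at *
      nlinarith
    have hs0 : 0 ≤ (1 - Real.exp (-t)) / (1 - Real.exp (-τ)) := by
      apply div_nonneg <;> linarith
    have h5 : (Real.exp (-t) / (1 - (1 - Real.exp (-τ))))^d = Real.exp (1 - r) ^ m := by
      rw [sub_sub_cancel, ← Real.exp_sub, ← Real.exp_nat_mul, ← Real.exp_nat_mul]
      congr 1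
      have : (d:ℝ) * τ = m := by rw [hτ]; field_simp
      linear_combination -hdt + this
    rw [h5, ← mul_pow]
    refine pow_le_pow_left₀ (by positivity) ?_ m
    have h6 : r ≤ 4 * Real.exp (r/4 - 1) := by linarith [Real.add_one_le_exp (r/4 - 1)]
    calc Real.exp (1 - r) * (2 * Real.exp 1 * ((1 - Real.exp (-t)) / (1 - Real.exp (-τ))))
        ≤ Real.exp (1 - r) * (2 * Real.exp 1 * (2 * (4 * Real.exp (r/4 - 1)))) := by
          have := hs.trans (by linarith : 2 * r ≤ 2 * (4 * Real.exp (r/4 - 1)))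
          gcongr
      _ = 16 * Real.exp (1 - r * (3/4)) := by
          have : Real.exp (1 - r * (3/4)) = Real.exp (1 - r) * Real.exp 1 * Real.exp (r/4-1) := by
            rw [← Real.exp_add, ← Real.exp_add]; ring_nf
          rw [this]; ring
      _ ≤ Real.exp 3 * Real.exp (1 - r * (3/4)) := by
          gcongr
          have : Real.exp 3 = Real.exp 1 ^ 3 := by rw [← Real.exp_nat_mul]; norm_num
          rw [this]
          have : (2.7:ℝ)^3 ≤ Real.exp 1 ^ 3 := by gcongr
          norm_num at this ⊢
          linarith
      _ ≤ _ := by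
          rw [← Real.exp_add]
          apply Real.exp_le_exp.2
          linarith
  · have hmd' : (d:ℝ) ≤ m := by exact_mod_cast hmd
    have htr : r ≤ t := by
      rw [hr, div_le_iff₀ hm0]; gcongr
    have hxh : Real.exp (-t) ≤ 1 - 1/2 := by
      have : Real.exp (-t) ≤ Real.exp (-1) := Real.exp_le_exp.2 (by linarith)
      have h2 : Real.exp (-1) ≤ 1/2 := by
        rw [Real.exp_neg, ← one_div]
        apply one_div_le_one_div_of_le <;> linarith
      linarith
    have hb := interp_bound d m hm q M hM (1/2) (Real.exp (-t)) (by norm_num) (by norm_num)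
      (Real.exp_nonneg _) hxh
    refine hb.trans ?_
    gcongr
    have hx0 := Real.exp_nonneg (-t)
    have h8 : 2 * (4 * Real.exp 1) ≤ Real.exp 8 := by
      have : Real.exp 8 = Real.exp 1 ^ 8 := by rw [← Real.exp_nat_mul]; norm_num
      rw [this]
      have : (2.7:ℝ)^8 ≤ Real.exp 1 ^ 8 := by gcongr
      norm_num at this ⊢
      linarith
    calc (Real.exp (-t) / (1 - 1/2))^d * (2 * Real.exp 1 * ((1 - Real.exp (-t)) / (1/2)))^m
        ≤ (Real.exp (-t) / (1 - 1/2))^d * (4 * Real.exp 1)^m := by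
          have h1x : 0 ≤ 1 - Real.exp (-t) := by linarith
          refine mul_le_mul_of_nonneg_left (pow_le_pow_left₀ (by positivity) ?_ m) (by positivity)
          have := Real.exp_pos 1
          nlinarith
      _ = Real.exp (-t)^d * (2 ^ d * (4 * Real.exp 1)^m) := by
          rw [show (Real.exp (-t) / (1 - 1/2)) = Real.exp (-t) * 2 by ring, mul_pow]; ring
      _ ≤ Real.exp (-t)^d * (2 ^ m * (4 * Real.exp 1)^m) := by
          gcongr
          norm_num
      _ ≤ Real.exp (-t)^d * Real.exp 8 ^ m := by
          rw [← mul_pow]; gcongr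
      _ = Real.exp (8 - r)^m := hexp 8
      _ ≤ _ := by
          gcongr
          linarith

open MeasureTheory in
theorem abstract_bound {E : Type*} [NormedAddCommGroup E] [NormedSpace ℝ E] [CompleteSpace E]
    (d m : ℕ) (hd : 1 ≤ d)
    (hm : 1 ≤ m) (q : ℕ → E) (M : ℝ)
    (hM : ∀ x : ℝ, 0 ≤ x → x ≤ 1 → ‖∑ j ∈ Finset.range (m+1), x ^ (d+j) • q j‖ ≤ M) :
    ‖∑ j ∈ Finset.range (m+1), (1 / ((d + j : ℕ) : ℝ)) ^ (1/2 : ℝ) • q j‖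
      ≤ Real.exp 8 * M * Real.sqrt (2 * m / d) := by
  have hm0 : (0:ℝ) < m := by exact_mod_cast hm
  have hd0 : (0:ℝ) < d := by exact_mod_cast hd
  have hG : 0 < Real.Gamma (1/2) := Real.Gamma_pos_of_pos (by norm_num)
  have hI : ∀ r : ℝ, 0 < r → ∫ t : ℝ in Set.Ioi 0, t ^ ((1/2 : ℝ) - 1) * Real.exp (-(r * t))
      = (1 / r) ^ (1/2 : ℝ) * Real.Gamma (1/2) := fun r hr =>
    Real.integral_rpow_mul_exp_neg_mul_Ioi (by norm_num) hr
  have hint : ∀ r : ℝ, 0 < r → IntegrableOn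
      (fun t : ℝ => t ^ ((1/2 : ℝ) - 1) * Real.exp (-(r * t))) (Set.Ioi 0) := by
    intro r hr
    by_contra h
    have h2 := hI r hr
    rw [integral_undef h] at h2
    have : 0 < (1 / r) ^ (1/2 : ℝ) * Real.Gamma (1/2) := by positivity
    linarith
  have e1 : ∫ t : ℝ in Set.Ioi 0, ∑ j ∈ Finset.range (m+1),
      (t ^ ((1/2 : ℝ) - 1) * Real.exp (-(((d + j : ℕ) : ℝ) * t))) • q j
      = Real.Gamma (1/2) • ∑ j ∈ Finset.range (m+1), (1 / ((d + j : ℕ) : ℝ)) ^ (1/2 : ℝ) • q j := by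
    rw [integral_finsetSum, Finset.smul_sum]
    · apply Finset.sum_congr rfl
      intro j _
      rw [integral_smul_const, hI _ (by positivity), smul_smul, mul_comm]
    · intro j _
      exact (hint _ (by positivity)).smul_const _
  have e2 : ‖∫ t : ℝ in Set.Ioi 0, ∑ j ∈ Finset.range (m+1),
      (t ^ ((1/2 : ℝ) - 1) * Real.exp (-(((d + j : ℕ) : ℝ) * t))) • q j‖
      ≤ ∫ t : ℝ in Set.Ioi 0, (Real.exp 8 * M) *
        (t ^ ((1/2 : ℝ) - 1) * Real.exp (-((d:ℝ) / (2 * m) * t))) := by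
    apply norm_integral_le_of_norm_le
    · exact (hint _ (by positivity)).const_mul _
    · refine (ae_restrict_iff' measurableSet_Ioi).2 (Filter.Eventually.of_forall fun t ht => ?_)
      have ht' : (0:ℝ) < t := ht
      have := decay d m hd hm q M hM t ht'.le
      have e3 : ∑ j ∈ Finset.range (m+1),
          (t ^ ((1/2 : ℝ) - 1) * Real.exp (-(((d + j : ℕ) : ℝ) * t))) • q j
          = t ^ ((1/2 : ℝ) - 1) • ∑ j ∈ Finset.range (m+1), (Real.exp (-t)) ^ (d+j) • q j := by
        rw [Finset.smul_sum]
        apply Finset.sum_congr rfl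
        intro j _
        rw [smul_smul, ← Real.exp_nat_mul]
        ring_nf
      have ht2 : 0 ≤ t ^ ((1/2 : ℝ) - 1) := by positivity
      rw [e3, norm_smul, Real.norm_eq_abs, abs_of_nonneg ht2]
      calc _ ≤ t ^ ((1/2 : ℝ) - 1) * (Real.exp 8 * Real.exp (-((d:ℝ) / (2 * m) * t)) * M) := by
            gcongr
        _ = _ := by ring
  rw [e1, integral_const_mul, hI _ (by positivity), norm_smul, Real.norm_eq_abs,
    abs_of_pos hG] at e2
  have e4 : (1 / ((d:ℝ) / (2 * m))) ^ (1/2 : ℝ) = Real.sqrt (2 * m / d) := by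
    rw [Real.sqrt_eq_rpow, one_div_div]
  rw [e4] at e2
  refine le_of_mul_le_mul_left (e2.trans_eq ?_) hG
  ring

theorem sgn_sq (b : Bool) : sgn b * sgn b = 1 := by cases b <;> simp [sgn]

theorem sgn_xor (a b : Bool) : sgn (a != b) = - (sgn a * sgn b) := by
  cases a <;> cases b <;> simp [sgn]

/-- Coordinatewise product of signs. -/
def flipBy {n : ℕ} (δ ε : Fin n → Bool) : Fin n → Bool := fun i => δ i == ε i

theorem flipBy_invol {n : ℕ} (δ : Fin n → Bool) : Function.Involutive (flipBy δ) := by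
  intro ε
  funext i
  simp only [flipBy]
  cases δ i <;> cases ε i <;> rfl

theorem walsh_flipBy {n : ℕ} (A : Finset (Fin n)) (δ ε : Fin n → Bool) :
    walsh A (flipBy δ ε) = walsh A δ * walsh A ε := by
  simp only [walsh, flipBy, ← Finset.prod_mul_distrib]
  apply Finset.prod_congr rfl
  intro i _
  cases δ i <;> cases ε i <;> simp [sgn]

/-- The biased product weight. -/
def wt {n : ℕ} (x : ℝ) (δ : Fin n → Bool) : ℝ := ∏ i, ((1 + x * sgn (δ i)) / 2)

theorem wt_nonneg {n : ℕ} {x : ℝ} (h0 : 0 ≤ x) (h1 : x ≤ 1) (δ : Fin n → Bool) : 0 ≤ wt x δ := by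
  apply Finset.prod_nonneg
  intro i _
  cases δ i <;> simp [sgn] <;> linarith

theorem sum_wt_walsh {n : ℕ} (x : ℝ) (A : Finset (Fin n)) :
    ∑ δ : Fin n → Bool, wt x δ * walsh A δ = x ^ A.card := by
  have h : ∀ δ : Fin n → Bool, wt x δ * walsh A δ
      = ∏ i, ((1 + x * sgn (δ i)) / 2 * (if i ∈ A then sgn (δ i) else 1)) := by
    intro δ
    rw [Finset.prod_mul_distrib, wt, walsh, Finset.prod_ite_mem, Finset.univ_inter]
  simp only [h]
  rw [← Fintype.prod_sum (fun i b => (1 + x * sgn b) / 2 * (if i ∈ A then sgn b else 1))]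
  have : ∀ i : Fin n, ∑ b : Bool, (1 + x * sgn b) / 2 * (if i ∈ A then sgn b else 1)
      = if i ∈ A then x else 1 := by
    intro i
    rw [Fintype.sum_bool]
    split_ifs <;> simp [sgn] <;> ring
  simp only [this]
  rw [Finset.prod_ite_mem, Finset.univ_inter, Finset.prod_const]

theorem sum_wt {n : ℕ} (x : ℝ) : ∑ δ : Fin n → Bool, wt x δ = 1 := by
  simpa [walsh] using sum_wt_walsh (n := n) x ∅

theorem sum_walsh_mul {n : ℕ} (ε δ : Fin n → Bool) :
    ∑ A : Finset (Fin n), walsh A ε * walsh A δ = if δ = ε then 2 ^ n else 0 := by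
  have h : ∀ A : Finset (Fin n), walsh A ε * walsh A δ = ∏ i ∈ A, (sgn (ε i) * sgn (δ i)) := by
    intro A
    rw [walsh, walsh, Finset.prod_mul_distrib]
  simp only [h]
  rw [← Finset.powerset_univ, ← Finset.prod_one_add]
  split_ifs with hd
  · subst hd
    simp only [sgn_sq]
    norm_num
  · obtain ⟨i, hi⟩ := Function.ne_iff.1 hd
    apply Finset.prod_eq_zero (Finset.mem_univ i)
    revert hi
    cases δ i <;> cases ε i <;> simp [sgn]

theorem inversion {n : ℕ} (f : (Fin n → Bool) → X) (ε : Fin n → Bool) :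
    ∑ A : Finset (Fin n), walsh A ε • coeff f A = f ε := by
  simp only [coeff, Finset.smul_sum, smul_smul]
  rw [Finset.sum_comm]
  have : ∀ δ : Fin n → Bool, ∑ A : Finset (Fin n), (walsh A ε * ((2 ^ n : ℝ)⁻¹ * walsh A δ)) • f δ
      = if δ = ε then f δ else 0 := by
    intro δ
    rw [← Finset.sum_smul]
    have : ∑ A : Finset (Fin n), walsh A ε * ((2 ^ n : ℝ)⁻¹ * walsh A δ)
        = (2 ^ n : ℝ)⁻¹ * ∑ A : Finset (Fin n), walsh A ε * walsh A δ := by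
      rw [Finset.mul_sum]
      exact Finset.sum_congr rfl fun A _ => by ring
    rw [this, sum_walsh_mul]
    split_ifs <;> simp
  simp [this]

theorem lpNorm_eq {n : ℕ} (p : ℝ) (hp : 1 < p) (f : (Fin n → Bool) → X) :
    lpNorm p f = ((2 ^ n : ℝ)⁻¹) ^ (1 / p) * ‖WithLp.toLp (ENNReal.ofReal p) f‖ := by
  have hpr : (ENNReal.ofReal p).toReal = p := ENNReal.toReal_ofReal (by linarith)
  rw [PiLp.norm_eq_sum (by rw [hpr]; linarith), hpr, lpNorm,
    Real.mul_rpow (by positivity) (Finset.sum_nonneg fun _ _ => by positivity)]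

theorem contraction {n : ℕ} (p : ℝ) (hp : 1 < p) (v : Finset (Fin n) → X) (x : ℝ) (h0 : 0 ≤ x)
    (h1 : x ≤ 1) :
    ‖WithLp.toLp (ENNReal.ofReal p) (fun ε : Fin n → Bool => ∑ A, x ^ A.card • walsh A ε • v A)‖
      ≤ ‖WithLp.toLp (ENNReal.ofReal p) (fun ε : Fin n → Bool => ∑ A, walsh A ε • v A)‖ := by
  haveI : Fact (1 ≤ ENNReal.ofReal p) := ⟨by simpa using hp.le⟩
  have hpr : (ENNReal.ofReal p).toReal = p := ENNReal.toReal_ofReal (by linarith)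
  set g : (Fin n → Bool) → X := fun ε => ∑ A, walsh A ε • v A with hg
  have e1 : WithLp.toLp (ENNReal.ofReal p)
      (fun ε : Fin n → Bool => ∑ A, x ^ A.card • walsh A ε • v A)
      = ∑ δ : Fin n → Bool, wt x δ •
        (WithLp.toLp (ENNReal.ofReal p) (fun ε => g (flipBy δ ε)) :
          PiLp (ENNReal.ofReal p) (fun _ : Fin n → Bool => X)) := by
    ext ε
    simp only [WithLp.ofLp_sum, WithLp.ofLp_smul, Finset.sum_apply, Pi.smul_apply, hg,
      Finset.smul_sum, walsh_flipBy, smul_smul]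
    rw [Finset.sum_comm]
    apply Finset.sum_congr rfl
    intro A _
    rw [← Finset.sum_smul, ← sum_wt_walsh, Finset.sum_mul]
    congr 1
    exact Finset.sum_congr rfl fun _ _ => by ring
  have e2 : ∀ δ : Fin n → Bool, ‖(WithLp.toLp (ENNReal.ofReal p) (fun ε => g (flipBy δ ε)) :
          PiLp (ENNReal.ofReal p) (fun _ : Fin n → Bool => X))‖
        = ‖(WithLp.toLp (ENNReal.ofReal p) g :
          PiLp (ENNReal.ofReal p) (fun _ : Fin n → Bool => X))‖ := by
    intro δ
    rw [PiLp.norm_eq_sum (by rw [hpr]; linarith), PiLp.norm_eq_sum (by rw [hpr]; linarith)]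
    congr 1
    exact Equiv.sum_comp (flipBy_invol δ).toPerm (fun ε => ‖g ε‖ ^ (ENNReal.ofReal p).toReal)
  rw [e1]
  refine (norm_sum_le _ _).trans ?_
  have : ∀ δ : Fin n → Bool, ‖wt x δ •
        (WithLp.toLp (ENNReal.ofReal p) (fun ε => g (flipBy δ ε)) :
          PiLp (ENNReal.ofReal p) (fun _ : Fin n → Bool => X))‖ = wt x δ * ‖(WithLp.toLp (ENNReal.ofReal p) g :
          PiLp (ENNReal.ofReal p) (fun _ : Fin n → Bool => X))‖ := by
    intro δ
    rw [norm_smul, e2, Real.norm_eq_abs, abs_of_nonneg (wt_nonneg h0 h1 δ)]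
  simp only [this]
  rw [← Finset.sum_mul, sum_wt, one_mul]

theorem level_sum {n : ℕ} {E : Type*} [AddCommGroup E] [Module ℝ E] (d m : ℕ)
    (a : Finset (Fin n) → E) (h : ∀ A, A.card < d ∨ d + m < A.card → a A = 0) (φ : ℕ → ℝ) :
    ∑ j ∈ Finset.range (m+1), φ (d + j) •
      ∑ A ∈ Finset.univ.filter (fun A : Finset (Fin n) => A.card = d + j), a A
      = ∑ A, φ A.card • a A := by
  simp only [Finset.smul_sum, Finset.sum_filter]
  rw [Finset.sum_comm' (t' := Finset.univ) (s' := fun _ => Finset.range (m+1)) (by simp)]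
  apply Finset.sum_congr rfl
  intro A _
  by_cases hA : A.card < d ∨ d + m < A.card
  · simp [h A hA]
  · rw [Finset.sum_eq_single (A.card - d)]
    · rw [if_pos (by omega)]
      congr 2; omega
    · intro j _ hj
      rw [if_neg (by omega), smul_zero]
    · intro hj
      exact absurd (Finset.mem_range.2 (by omega)) hj

/-- **Reverse Bernstein–Markov inequality for `Δ^{1/2}`** on `K`-convex spaces. -/
theorem stmt18 {X : Type*} [NormedAddCommGroup X] [NormedSpace ℂ X] [CompleteSpace X]
    (hX : KConvex X) (p : ℝ) (hp : 1 < p) :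
    ∃ c : ℝ, 0 < c ∧
      ∀ n d m : ℕ, 1 ≤ d → 1 ≤ m → d + m ≤ n →
        ∀ f : (Fin n → Bool) → X, degLE f (d + m) → tailSpace f d →
          c * Real.sqrt ((d : ℝ) / (m : ℝ)) * lpNorm p f ≤
            lpNorm p (fracLap (1 / 2) f) := by
  refine ⟨(Real.exp 8 * Real.sqrt 2)⁻¹, by positivity, ?_⟩
  intro n d m hd hm _ f hdeg htail
  have hm0 : (0:ℝ) < m := by exact_mod_cast hm
  have hd0 : (0:ℝ) < d := by exact_mod_cast hd
  haveI : Fact (1 ≤ ENNReal.ofReal p) := ⟨by simpa using hp.le⟩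
  set a : Finset (Fin n) → PiLp (ENNReal.ofReal p) (fun _ : Fin n → Bool => X) :=
    fun A => WithLp.toLp (ENNReal.ofReal p) (fun ε => walsh A ε • coeff f A) with ha
  have hazero : ∀ A, A.card < d ∨ d + m < A.card → a A = 0 := by
    intro A hA
    have : coeff f A = 0 := hA.elim (htail A) (hdeg A)
    ext ε
    simp [ha, this]
  set b : Finset (Fin n) → PiLp (ENNReal.ofReal p) (fun _ : Fin n → Bool => X) :=
    fun A => (A.card : ℝ) ^ (1/2 : ℝ) • a A with hb
  have hbzero : ∀ A, A.card < d ∨ d + m < A.card → b A = 0 := by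
    intro A hA
    simp only [hb, hazero A hA, smul_zero]
  set q : ℕ → PiLp (ENNReal.ofReal p) (fun _ : Fin n → Bool => X) :=
    fun j => ∑ A ∈ Finset.univ.filter (fun A : Finset (Fin n) => A.card = d + j), b A with hq
  have hM : ∀ x : ℝ, 0 ≤ x → x ≤ 1 → ‖∑ j ∈ Finset.range (m+1), x ^ (d+j) • q j‖
      ≤ ‖WithLp.toLp (ENNReal.ofReal p) (fracLap (1 / 2) f)‖ := by
    intro x h0 h1
    rw [hq, level_sum d m b hbzero (fun k => x ^ k)]
    convert contraction p hp (fun A => (A.card : ℝ) ^ (1/2 : ℝ) • coeff f A) x h0 h1 using 2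
    · ext ε
      simp only [WithLp.ofLp_sum, WithLp.ofLp_smul, Finset.sum_apply, Pi.smul_apply, hb, ha]
      exact Finset.sum_congr rfl fun A _ => by rw [smul_comm (walsh A ε)]
    · ext ε
      simp only [fracLap]
      exact Finset.sum_congr rfl fun A _ => by rw [smul_comm (walsh A ε)]
  have key := abstract_bound d m hd hm q _ hM
  have e1 : ∑ j ∈ Finset.range (m+1), (1 / ((d + j : ℕ) : ℝ)) ^ (1/2 : ℝ) • q j
      = WithLp.toLp (ENNReal.ofReal p) f := by
    rw [hq, level_sum d m b hbzero (fun k => (1 / (k : ℝ)) ^ (1/2 : ℝ))]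
    have : ∀ A : Finset (Fin n), (1 / (A.card : ℝ)) ^ (1/2 : ℝ) • b A = a A := by
      intro A
      by_cases hA : A.card < d
      · rw [hbzero A (Or.inl hA), hazero A (Or.inl hA), smul_zero]
      · have : (0:ℝ) < A.card := by exact_mod_cast (by omega : 0 < A.card)
        simp only [hb, smul_smul]
        rw [← Real.mul_rpow (by positivity) (by positivity), one_div_mul_cancel this.ne',
          Real.one_rpow, one_smul]
    simp only [this]
    ext ε
    simp only [WithLp.ofLp_sum, Finset.sum_apply, ha]
    exact inversion f ε
  rw [e1] at key
  rw [lpNorm_eq p hp, lpNorm_eq p hp]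
  have h2 : Real.sqrt (2 * m / d) = Real.sqrt 2 * (Real.sqrt (d / m))⁻¹ := by
    rw [← Real.sqrt_inv, ← Real.sqrt_mul (by norm_num), inv_div, mul_div_assoc]
  rw [h2] at key
  have hs : 0 < Real.sqrt ((d:ℝ) / m) := Real.sqrt_pos.2 (by positivity)
  have h3 : (Real.exp 8 * Real.sqrt 2)⁻¹ * Real.sqrt ((d : ℝ) / (m : ℝ)) *
      ‖WithLp.toLp (ENNReal.ofReal p) f‖
      ≤ ‖WithLp.toLp (ENNReal.ofReal p) (fracLap (1 / 2) f)‖ := by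
    refine (mul_le_mul_of_nonneg_left key (by positivity)).trans_eq ?_
    have : Real.sqrt 2 ≠ 0 := by positivity
    field_simp
  calc _ = ((2 ^ n : ℝ)⁻¹) ^ (1 / p) * ((Real.exp 8 * Real.sqrt 2)⁻¹ *
        Real.sqrt ((d : ℝ) / (m : ℝ)) * ‖WithLp.toLp (ENNReal.ofReal p) f‖) := by ring
    _ ≤ _ := by gcongr

end HammingCube
end
end
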